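/- Let ξ be a solid partition with legs (π¹,π²,π³,π⁴) with π⁴ = ∅, and for i ∈ {1,2,3} let P_i := {a ∈ ℕ⁴ : a_i = 0 and proj_i(a) ∈ π^i}. Then Σ_{□ ∈ ξ_fin} (1 − nlegs(□)) · ( |ξ ∩ S₋(□)| + Σ_{□' ∈ ξ ∩ S₊(□)} nlegs(□') ) + Σ over ordered pairs (i,j) with i ≠ j ∈ {1,2,3} of #{ (a,b,ε) ∈ P_i × P_j × {0,1} : b − a − e_j − e₄ − ε·e_k ∈ ℤ·(1,1,1,1) } ≡ NP₄(ξ) (mod 2), where for each ordered pair (i,j), k denotes the unique element of {1,2,3} \ {i,j}. (This is the combinatorial content of the paper's Proposition comparing the Cao–Kool–Monavari half with the canonical half: the rank of the A-fixed part of the discrepancy character S̄_{1/2} = V̄_{1/2}^{CKM,4} − V̄_{1/2}^{σ,4} is congruent to the Nekrasov–Piazzalunga sign exponent NP₄(ξ) modulo 2.) -/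

import Mathlib

open scoped BigOperators

/-- A subset of `ℕ^d` is downward closed if it contains `p − e` whenever it contains `p`
and `p − e ∈ ℕ^d`, for a standard basis vector `e`. -/
def DownClosed {d : ℕ} (S : Set (Fin d → ℕ)) : Prop :=
  ∀ p ∈ S, ∀ i : Fin d, 0 < p i → Function.update p i (p i - 1) ∈ S

/-- `proj i` deletes the `i`-th coordinate of a point of `ℕ⁴`. -/
def proj (i : Fin 4) (p : Fin 4 → ℕ) : Fin 3 → ℕ := fun j => p (i.succAbove j)

/-- A plane partition is a finite downward closed subset of `ℕ³`. -/
def IsPlanePartition (π : Set (Fin 3 → ℕ)) : Prop := π.Finite ∧ DownClosed π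

/-- A solid partition with legs `(π 0, π 1, π 2, π 3)`: a downward closed subset
`ξ ⊆ ℕ⁴` such that, far enough along the `i`-th axis, membership in `ξ` is governed by
the plane partition `π i`. -/
def IsSolidPartitionWithLegs (π : Fin 4 → Set (Fin 3 → ℕ)) (ξ : Set (Fin 4 → ℕ)) : Prop :=
  (∀ i, IsPlanePartition (π i)) ∧ DownClosed ξ ∧
    ∃ N : ℕ, ∀ i : Fin 4, ∀ p : Fin 4 → ℕ, N ≤ p i → (p ∈ ξ ↔ proj i p ∈ π i)

/-- The number of legs containing a box. -/
noncomputable def nlegs (π : Fin 4 → Set (Fin 3 → ℕ)) (p : Fin 4 → ℕ) : ℕ :=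
  {i : Fin 4 | proj i p ∈ π i}.ncard

/-- `S₋(□) = {□ − (ε₁,ε₂,ε₃,1) − m·(1,1,1,1) : ε ∈ {0,1}³, m ∈ ℕ} ∩ ℕ⁴`. -/
def Sminus (n : Fin 4 → ℕ) : Set (Fin 4 → ℕ) :=
  { x | ∃ ε : Fin 3 → ℕ, (∀ t, ε t ≤ 1) ∧ ∃ m : ℕ,
      ∀ t : Fin 4, (x t : ℤ) =
        (n t : ℤ) - (if h : (t : ℕ) < 3 then (ε ⟨t, h⟩ : ℤ) else 1) - (m : ℤ) }

/-- `S₊(□) = {□ + (ε₁,ε₂,ε₃,0) + m·(1,1,1,1) : ε ∈ {0,1}³, m ∈ ℕ}`. -/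
def Splus (n : Fin 4 → ℕ) : Set (Fin 4 → ℕ) :=
  { x | ∃ ε : Fin 3 → ℕ, (∀ t, ε t ≤ 1) ∧ ∃ m : ℕ,
      ∀ t : Fin 4, x t = n t + (if h : (t : ℕ) < 3 then ε ⟨t, h⟩ else 0) + m }

/-- For distinct `i, j` among the first three coordinates, the remaining element `k` of
`{0,1,2}` (so that `i.val + j.val + k.val = 3`). -/
def restIdx (i j : Fin 4) : Fin 4 := ⟨3 - i.1 - j.1, by omega⟩

/-- The set of triples `(a, b, ε) ∈ P_i × P_j × {0,1}` such that
`b − a − e_j − e₄ − ε·e_k ∈ ℤ·(1,1,1,1)`, where `P_i = {a ∈ ℕ⁴ : a_i = 0, proj_i a ∈ π^i}`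
and `k` is the remaining index of `{1,2,3}`. -/
def pairSet (π : Fin 4 → Set (Fin 3 → ℕ)) (i j : Fin 4) :
    Set ((Fin 4 → ℕ) × (Fin 4 → ℕ) × ℕ) :=
  { q | (q.1 i = 0 ∧ proj i q.1 ∈ π i) ∧ (q.2.1 j = 0 ∧ proj j q.2.1 ∈ π j) ∧
      q.2.2 ≤ 1 ∧ ∃ c : ℤ, ∀ m : Fin 4,
        (q.2.1 m : ℤ) - (q.1 m : ℤ) - (if m = j then 1 else 0) - (if m = 3 then 1 else 0)
          - (q.2.2 : ℤ) * (if m = restIdx i j then 1 else 0) = c }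

/-!
Both correction terms in the weight of a box disappear modulo `2`, and only `|S₋(□)|` survives.

* Reading the condition on `b − a − e_j − e₄ − ε·e_k` in the `i`-th and the `j`-th coordinate gives
  `b_i = c = −a_j − 1`, which is impossible: there are no pairs.
* Toggling the `i`-th coordinate is a fixed-point-free involution of the part of `S₊(□)` lying in
  the `i`-th leg, so every leg contributes an even number to the sum of `nlegs` over `ξ ∩ S₊(□)`.
* `S₋(□)` is contained in `ξ`. Its layer at depth `m < n₄` is a product of three sets, which have
  `2`, `1` or `0` elements according to whether `m < n_t`, `m = n_t` or `m > n_t`. Hence it is odd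
  exactly for `m = n₁ = n₂ = n₃`, and such a layer exists if and only if `n₁ = n₂ = n₃ < n₄`.
-/

lemma even_ncard_of_involution {α : Type*} {S : Set α} {g : α → α} (hmaps : Set.MapsTo g S S)
    (hinv : Set.LeftInvOn g g S) (hne : ∀ x ∈ S, g x ≠ x) : Even S.ncard := by
  rcases S.finite_or_infinite with hS | hS
  · have hsum : ∑ _x ∈ hS.toFinset, (1 : ZMod 2) = 0 :=
      Finset.sum_involution (fun x _ => g x) (fun _ _ => CharTwo.add_self_eq_zero 1)
        (fun _ hx _ => hne _ (hS.mem_toFinset.1 hx))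
        (fun _ hx => hS.mem_toFinset.2 (hmaps (hS.mem_toFinset.1 hx)))
        (fun _ hx => hinv (hS.mem_toFinset.1 hx))
    rw [Set.ncard_eq_toFinset_card S hS, ← ZMod.natCast_eq_zero_iff_even]
    simpa using hsum
  · simp [hS.ncard]

lemma DownClosed.isLowerSet {d : ℕ} {S : Set (Fin d → ℕ)} (hS : DownClosed S) : IsLowerSet S := by
  suffices h : Antitone (· ∈ S) from fun _ _ hle => h hle
  refine (antitone_iff_forall_covBy _).2 fun q p hqp hp => ?_
  obtain ⟨i, hi, heq⟩ := Pi.covBy_iff.1 hqp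
  have hpi : p i = q i + 1 := (Nat.covBy_iff_add_one_eq.1 hi).symm
  have hq : Function.update p i (p i - 1) = q :=
    Function.update_eq_iff.2 ⟨by omega, fun j hj => (heq j hj).symm⟩
  exact hq ▸ hS p hp i (by omega)

lemma proj_update_self (i : Fin 4) (x : Fin 4 → ℕ) (v : ℕ) :
    proj i (Function.update x i v) = proj i x := by
  funext j
  simp [proj, Fin.succAbove_ne]

open Classical in
lemma nlegs_eq_sum (π : Fin 4 → Set (Fin 3 → ℕ)) (p : Fin 4 → ℕ) :
    nlegs π p = ∑ i, if proj i p ∈ π i then 1 else 0 := by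
  simp [nlegs, Set.ncard_eq_toFinset_card']

lemma pairSet_eq_empty (π : Fin 4 → Set (Fin 3 → ℕ)) {i j : Fin 4} (hi : i ≠ 3) (hj : j ≠ 3)
    (hij : i ≠ j) : pairSet π i j = ∅ := by
  rw [Set.eq_empty_iff_forall_notMem]
  rintro ⟨a, b, e⟩ ⟨⟨ha, -⟩, ⟨hb, -⟩, -, c, hc⟩
  obtain ⟨hik, hjk⟩ : i ≠ restIdx i j ∧ j ≠ restIdx i j := by
    clear hc ha hb
    decide +revert
  have hci : (b i : ℤ) = c := by simpa [show a i = 0 from ha, hi, hij, hik] using hc i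
  have hcj : -(a j : ℤ) - 1 = c := by simpa [show b j = 0 from hb, hj, hjk] using hc j
  omega

lemma mem_Splus_iff {n x : Fin 4 → ℕ} : x ∈ Splus n ↔ ∃ m, x 3 = n 3 + m ∧ ∀ t : Fin 3,
    x t.castSucc = n t.castSucc + m ∨ x t.castSucc = n t.castSucc + m + 1 := by
  constructor
  · rintro ⟨ε, hε, m, hx⟩
    refine ⟨m, by simpa using hx 3, fun t => ?_⟩
    have hεt := hε t
    have hxt : x t.castSucc = n t.castSucc + ε t + m := by simpa using hx t.castSucc
    omega
  · rintro ⟨m, h3, hx⟩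
    refine ⟨fun t => x t.castSucc - n t.castSucc - m, fun t => ?_, m,
      Fin.forall_fin_succ'.2 ⟨fun t => ?_, ?_⟩⟩
    · grind
    · have := hx t
      simp only [Fin.val_castSucc, Fin.is_lt, ↓reduceDIte, Fin.eta]
      omega
    · simpa using h3

lemma mem_Sminus_iff {n x : Fin 4 → ℕ} : x ∈ Sminus n ↔ ∃ m, n 3 = x 3 + m + 1 ∧ ∀ t : Fin 3,
    n t.castSucc = x t.castSucc + m ∨ n t.castSucc = x t.castSucc + m + 1 := by
  constructor
  · rintro ⟨ε, hε, m, hx⟩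
    have h3 : (x 3 : ℤ) = n 3 - 1 - m := by simpa using hx 3
    refine ⟨m, by omega, fun t => ?_⟩
    have hεt := hε t
    have hxt : (x t.castSucc : ℤ) = n t.castSucc - ε t - m := by simpa using hx t.castSucc
    omega
  · rintro ⟨m, h3, hx⟩
    refine ⟨fun t => n t.castSucc - x t.castSucc - m, fun t => ?_, m,
      Fin.forall_fin_succ'.2 ⟨fun t => ?_, ?_⟩⟩
    · grind
    · have := hx t
      simp only [Fin.val_castSucc, Fin.is_lt, ↓reduceDIte, Fin.eta]
      omega
    · rw [dif_neg (by simp)]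
      change (x 3 : ℤ) = n 3 - 1 - m
      omega

lemma le_of_mem_Sminus {n x : Fin 4 → ℕ} (hx : x ∈ Sminus n) : x ≤ n := by
  obtain ⟨m, h3, hx⟩ := mem_Sminus_iff.1 hx
  refine Fin.forall_fin_succ'.2 ⟨fun t => ?_, ?_⟩
  · have hxt := hx t
    exact (by omega : x t.castSucc ≤ n t.castSucc)
  · exact (by omega : x 3 ≤ n 3)

lemma Sminus_finite (n : Fin 4 → ℕ) : (Sminus n).Finite :=
  (Set.finite_Iic n).subset fun _ => le_of_mem_Sminus

/-- The layer of `S₋(n)` at depth `m`: the values of the first three coordinates of those boxes of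
`S₋(n)` whose last coordinate is `n 3 - (m + 1)`. Because of the truncated subtraction, its `t`-th
factor is `{n_t - m - 1, n_t - m}`, `{0}` or `∅` according to whether `m < n_t`, `m = n_t` or
`n_t < m`. -/
def SminusLayer (n : Fin 4 → ℕ) (m : ℕ) : Finset (Fin 3 → ℕ) :=
  Fintype.piFinset fun t => Finset.Ico (n t.castSucc - (m + 1)) (n t.castSucc + 1 - m)

lemma mem_SminusLayer_iff {n : Fin 4 → ℕ} {m : ℕ} {y : Fin 3 → ℕ} : y ∈ SminusLayer n m ↔
    ∀ t, n t.castSucc = y t + m ∨ n t.castSucc = y t + m + 1 := by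
  simp only [SminusLayer, Fintype.mem_piFinset, Finset.mem_Ico]
  exact forall_congr' fun t => by omega

lemma card_SminusLayer_modEq (n : Fin 4 → ℕ) (m : ℕ) :
    (SminusLayer n m).card ≡ if ∀ t : Fin 3, n t.castSucc = m then 1 else 0 [MOD 2] := by
  have hfactor (c : ℕ) : c + 1 - m - (c - (m + 1)) ≡ if c = m then 1 else 0 [MOD 2] := by
    rw [Nat.ModEq]
    split_ifs <;> omega
  have hprod := Nat.ModEq.prod (s := Finset.univ) fun t _ => hfactor (n (Fin.castSucc t))
  simpa [SminusLayer, Fintype.card_piFinset, Fintype.prod_ite_zero] using hprod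

lemma Sminus_eq_image (n : Fin 4 → ℕ) :
    Sminus n = (fun q : (_ : ℕ) × (Fin 3 → ℕ) => (Fin.snoc q.2 (n 3 - (q.1 + 1)) : Fin 4 → ℕ)) ''
      (Finset.range (n 3)).sigma (SminusLayer n) := by
  ext x
  simp only [mem_Sminus_iff, Set.mem_image, Finset.mem_coe, Finset.mem_sigma, Finset.mem_range,
    mem_SminusLayer_iff]
  constructor
  · rintro ⟨m, h3, hx⟩
    have hm : m < n 3 := by omega
    have hlast : n 3 - (m + 1) = x (Fin.last 3) := (by omega : _ = x 3)
    exact ⟨⟨m, Fin.init x⟩, ⟨hm, hx⟩, by simp only [hlast, Fin.snoc_init_self]⟩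
  · rintro ⟨⟨m, y⟩, ⟨hm, hy⟩, rfl⟩
    have hdepth : n 3 = n 3 - (m + 1) + m + 1 := by grind
    refine ⟨m, ?_, fun t => by simpa using hy t⟩
    simpa only [show (3 : Fin 4) = Fin.last 3 from rfl, Fin.snoc_last] using hdepth

lemma ncard_Sminus (n : Fin 4 → ℕ) :
    (Sminus n).ncard = ∑ m ∈ Finset.range (n 3), (SminusLayer n m).card := by
  rw [Sminus_eq_image, Set.InjOn.ncard_image, Set.ncard_coe_finset, Finset.card_sigma]
  rintro ⟨m, y⟩ hm ⟨m', y'⟩ hm' h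
  obtain ⟨rfl, h3⟩ : y = y' ∧ n 3 - (m + 1) = n 3 - (m' + 1) := Fin.snoc_injective2 h
  have hlt : m < n 3 := Finset.mem_range.1 (Finset.mem_sigma.1 hm).1
  have hlt' : m' < n 3 := Finset.mem_range.1 (Finset.mem_sigma.1 hm').1
  obtain rfl : m = m' := by omega
  rfl

lemma ncard_Sminus_modEq (n : Fin 4 → ℕ) :
    (Sminus n).ncard ≡ if n 0 = n 1 ∧ n 1 = n 2 ∧ n 2 < n 3 then 1 else 0 [MOD 2] := by
  have hall (m) : (∀ t : Fin 3, n t.castSucc = m) ↔ m = n 2 ∧ n 0 = n 1 ∧ n 1 = n 2 := by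
    constructor
    · intro h
      exact ⟨(h 2).symm, (h 0).trans (h 1).symm, (h 1).trans (h 2).symm⟩
    · rintro ⟨rfl, h01, h12⟩ t
      fin_cases t
      exacts [h01.trans h12, h12, rfl]
  calc (Sminus n).ncard
    _ ≡ ∑ m ∈ Finset.range (n 3), if ∀ t : Fin 3, n t.castSucc = m then 1 else 0 [MOD 2] := by
      rw [ncard_Sminus]
      exact Nat.ModEq.sum fun m _ => card_SminusLayer_modEq n m
    _ = ∑ m ∈ Finset.range (n 3), if m = n 2 then if n 0 = n 1 ∧ n 1 = n 2 then 1 else 0 else 0 :=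
      Finset.sum_congr rfl fun m _ => by
        rw [← ite_and]
        exact if_congr (hall m) rfl rfl
    _ = if n 0 = n 1 ∧ n 1 = n 2 ∧ n 2 < n 3 then 1 else 0 := by
      rw [Finset.sum_ite_eq', ← ite_and]
      exact if_congr (by rw [Finset.mem_range]; tauto) rfl rfl

/-- For a box `x` of `S₊(n)`, whose `t`-th coordinate is `n_t + m` or `n_t + m + 1` with
`m = x 3 - n 3`, the box of `S₊(n)` obtained by exchanging these two values. -/
def toggle (n : Fin 4 → ℕ) (t : Fin 3) (x : Fin 4 → ℕ) : Fin 4 → ℕ :=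
  Function.update x t.castSucc (2 * (n t.castSucc + (x 3 - n 3)) + 1 - x t.castSucc)

lemma toggle_apply_three (n : Fin 4 → ℕ) (t : Fin 3) (x : Fin 4 → ℕ) : toggle n t x 3 = x 3 :=
  Function.update_of_ne (Fin.castSucc_ne_last t).symm _ _

lemma toggle_ne (n : Fin 4 → ℕ) (t : Fin 3) (x : Fin 4 → ℕ) : toggle n t x ≠ x := fun hfix => by
  have := Function.update_eq_self_iff.1 hfix
  omega

lemma toggle_mem_Splus {n x : Fin 4 → ℕ} (hx : x ∈ Splus n) (t : Fin 3) :
    toggle n t x ∈ Splus n := by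
  obtain ⟨m, h3, hx⟩ := mem_Splus_iff.1 hx
  refine mem_Splus_iff.2 ⟨m, by rwa [toggle_apply_three], fun s => ?_⟩
  rcases eq_or_ne s t with rfl | hs
  · have := hx s
    rw [toggle, Function.update_self]
    omega
  · rw [toggle, Function.update_of_ne (by simpa using hs)]
    exact hx s

lemma toggle_toggle {n x : Fin 4 → ℕ} (hx : x ∈ Splus n) (t : Fin 3) :
    toggle n t (toggle n t x) = x := by
  obtain ⟨m, h3, hx⟩ := mem_Splus_iff.1 hx
  have := hx t
  rw [toggle, toggle_apply_three, toggle, Function.update_idem, Function.update_self,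
    Function.update_eq_self_iff]
  omega

lemma even_ncard_Splus_inter_leg (n : Fin 4 → ℕ) (t : Fin 3) (T : Set (Fin 3 → ℕ)) :
    Even {x ∈ Splus n | proj t.castSucc x ∈ T}.ncard :=
  even_ncard_of_involution (g := toggle n t)
    (fun _ hx => ⟨toggle_mem_Splus hx.1 t, by simpa only [toggle, proj_update_self] using hx.2⟩)
    (fun _ hx => toggle_toggle hx.1 t) (fun x _ => toggle_ne n t x)

lemma exists_forall_le_imp_legs_subset {π : Fin 4 → Set (Fin 3 → ℕ)} (hπ : ∀ i, (π i).Finite) :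
    ∃ M : ℕ, ∀ (x : Fin 4 → ℕ) (t : Fin 4), M ≤ x t → {i | proj i x ∈ π i} ⊆ {t} := by
  obtain ⟨u, hu⟩ := (Set.finite_iUnion hπ).bddAbove
  refine ⟨Finset.univ.sup u + 1, fun x t hxt i hi => ?_⟩
  by_contra hit
  obtain ⟨s, rfl⟩ := Fin.exists_succAbove_eq (Ne.symm hit)
  have hle : proj i x s ≤ u s := hu (Set.mem_iUnion.2 ⟨i, hi⟩) s
  have hsup : u s ≤ Finset.univ.sup u := Finset.le_sup (Finset.mem_univ s)
  exact absurd (hle.trans hsup) (by simpa [proj] using hxt)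

namespace IsSolidPartitionWithLegs

variable {π : Fin 4 → Set (Fin 3 → ℕ)} {ξ : Set (Fin 4 → ℕ)}

lemma isLowerSet (hξ : IsSolidPartitionWithLegs π ξ) : IsLowerSet ξ :=
  hξ.2.1.isLowerSet

lemma mem_of_proj_mem (hξ : IsSolidPartitionWithLegs π ξ) {i : Fin 4} {x : Fin 4 → ℕ}
    (hx : proj i x ∈ π i) : x ∈ ξ := by
  obtain ⟨N, hN⟩ := hξ.2.2
  have hfar : Function.update x i (max (x i) N) ∈ ξ :=
    (hN i _ (by simp)).2 (by rwa [proj_update_self])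
  exact hξ.isLowerSet (le_update_self_iff.2 (le_max_left _ _)) hfar

lemma finite_nlegs_ne_one (hξ : IsSolidPartitionWithLegs π ξ) :
    {p ∈ ξ | nlegs π p ≠ 1}.Finite := by
  obtain ⟨N, hN⟩ := hξ.2.2
  obtain ⟨M, hM⟩ := exists_forall_le_imp_legs_subset fun i => (hξ.1 i).1
  refine (Set.finite_Iic fun _ => max M N).subset fun x ⟨hx, hlegs⟩ t => ?_
  by_contra! hlt
  obtain ⟨hMx, hNx⟩ : M ≤ x t ∧ N ≤ x t := max_le_iff.1 hlt.le
  have ht : proj t x ∈ π t := (hN t x hNx).1 hx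
  have heq : {i | proj i x ∈ π i} = {t} :=
    (hM x t hMx).antisymm (Set.singleton_subset_iff.2 ht)
  exact hlegs (by rw [nlegs, heq, Set.ncard_singleton])

lemma finite_of_le_add_apply_three (hξ : IsSolidPartitionWithLegs π ξ) (h4 : π 3 = ∅)
    {S : Set (Fin 4 → ℕ)} (hS : S ⊆ ξ) (c : Fin 4 → ℕ) (hc : ∀ x ∈ S, ∀ t, x t ≤ c t + x 3) :
    S.Finite := by
  obtain ⟨N, hN⟩ := hξ.2.2
  have hlt (x) (hx : x ∈ ξ) : x 3 < N := by
    by_contra! hle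
    simpa [h4] using (hN 3 x hle).1 hx
  refine (Set.finite_Iic fun t => c t + N).subset fun x hx t => ?_
  exact (hc x hx t).trans (Nat.add_le_add_left (hlt x (hS hx)).le _)

lemma finite_diagonal (hξ : IsSolidPartitionWithLegs π ξ) (h4 : π 3 = ∅) :
    {p ∈ ξ | p 0 = p 1 ∧ p 1 = p 2 ∧ p 2 < p 3}.Finite := by
  refine hξ.finite_of_le_add_apply_three h4 (Set.sep_subset _ _) 0 ?_
  rintro x ⟨-, h01, h12, h23⟩ t
  rw [Pi.zero_apply, zero_add]
  fin_cases t <;> grind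

lemma finite_inter_Splus (hξ : IsSolidPartitionWithLegs π ξ) (h4 : π 3 = ∅) (n : Fin 4 → ℕ) :
    (ξ ∩ Splus n).Finite := by
  refine hξ.finite_of_le_add_apply_three h4 Set.inter_subset_left (fun t => n t + 1) ?_
  rintro x ⟨-, hx⟩
  obtain ⟨m, h3, hx⟩ := mem_Splus_iff.1 hx
  refine Fin.forall_fin_succ'.2 ⟨fun t => ?_, ?_⟩
  · have := hx t
    omega
  · exact (by omega : x 3 ≤ n 3 + 1 + x 3)

lemma inter_Sminus (hξ : IsSolidPartitionWithLegs π ξ) {n : Fin 4 → ℕ} (hn : n ∈ ξ) :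
    ξ ∩ Sminus n = Sminus n :=
  Set.inter_eq_right.2 fun _ hx => hξ.isLowerSet (le_of_mem_Sminus hx) hn

lemma finsum_nlegs_inter_Splus (hξ : IsSolidPartitionWithLegs π ξ) (h4 : π 3 = ∅)
    (n : Fin 4 → ℕ) : ∑ᶠ x ∈ ξ ∩ Splus n, (nlegs π x : ℤ) =
      ∑ t : Fin 3, ({x ∈ Splus n | proj t.castSucc x ∈ π t.castSucc}.ncard : ℤ) := by
  classical
  have hfin := hξ.finite_inter_Splus h4 n
  have hleg (t : Fin 3) : {x ∈ Splus n | proj t.castSucc x ∈ π t.castSucc} =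
      ↑{x ∈ hfin.toFinset | proj t.castSucc x ∈ π t.castSucc} := by
    ext x
    simp only [Set.mem_ofPred_eq, Finset.coe_filter, Set.Finite.mem_toFinset, Set.mem_inter_iff]
    exact and_congr_left fun hx => (and_iff_right (hξ.mem_of_proj_mem hx)).symm
  have hnlegs (x) : nlegs π x = ∑ t : Fin 3, if proj t.castSucc x ∈ π t.castSucc then 1 else 0 := by
    rw [nlegs_eq_sum, Fin.sum_univ_castSucc, if_neg (h4 ▸ Set.notMem_empty _), add_zero]
  rw [finsum_mem_eq_finite_toFinset_sum _ hfin]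
  simp_rw [hnlegs, hleg, Set.ncard_coe_finset, Nat.cast_sum, Finset.natCast_card_filter]
  push_cast
  exact Finset.sum_comm

lemma even_finsum_nlegs_inter_Splus (hξ : IsSolidPartitionWithLegs π ξ) (h4 : π 3 = ∅)
    (n : Fin 4 → ℕ) : Even (∑ᶠ x ∈ ξ ∩ Splus n, (nlegs π x : ℤ)) := by
  rw [hξ.finsum_nlegs_inter_Splus h4]
  exact Finset.even_sum _ fun t _ => (even_ncard_Splus_inter_leg n t _).natCast

lemma ncard_add_finsum_modEq (hξ : IsSolidPartitionWithLegs π ξ) (h4 : π 3 = ∅)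
    {n : Fin 4 → ℕ} (hn : n ∈ ξ) :
    ((ξ ∩ Sminus n).ncard : ℤ) + ∑ᶠ x ∈ ξ ∩ Splus n, (nlegs π x : ℤ) ≡
      if n 0 = n 1 ∧ n 1 = n 2 ∧ n 2 < n 3 then 1 else 0 [ZMOD 2] := by
  have hminus := Int.natCast_modEq_iff.2 (ncard_Sminus_modEq n)
  have hplus := Int.modEq_zero_iff_dvd.2 (hξ.even_finsum_nlegs_inter_Splus h4 n).two_dvd
  rw [hξ.inter_Sminus hn]
  simpa using hminus.add hplus

lemma finsum_weight_modEq (hξ : IsSolidPartitionWithLegs π ξ) (h4 : π 3 = ∅) :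
    ∑ᶠ p ∈ {p ∈ ξ | nlegs π p ≠ 1}, (1 - (nlegs π p : ℤ)) *
        (((ξ ∩ Sminus p).ncard : ℤ) + ∑ᶠ x ∈ ξ ∩ Splus p, (nlegs π x : ℤ)) ≡
      ∑ᶠ p ∈ {p ∈ ξ | p 0 = p 1 ∧ p 1 = p 2 ∧ p 2 < p 3}, (1 - (nlegs π p : ℤ)) [ZMOD 2] := by
  classical
  calc
    _ ≡ ∑ᶠ p ∈ {p ∈ ξ | nlegs π p ≠ 1}, (1 - (nlegs π p : ℤ)) *
        (if p 0 = p 1 ∧ p 1 = p 2 ∧ p 2 < p 3 then 1 else 0) [ZMOD 2] := by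
      have hfin := hξ.finite_nlegs_ne_one
      simp only [finsum_mem_eq_finite_toFinset_sum _ hfin]
      exact Int.ModEq.sum fun p hp =>
        (hξ.ncard_add_finsum_modEq h4 (hfin.mem_toFinset.1 hp).1).mul_left _
    _ = _ := by
      simp only [finsum_mem_def]
      refine finsum_congr fun p => ?_
      simp only [Set.indicator_apply, Set.mem_ofPred_eq]
      split_ifs <;> simp_all

end IsSolidPartitionWithLegs

/-- the combinatorial comparison of the Cao–Kool–Monavari half with the
canonical half: for a solid partition `ξ` with legs `(π¹,π²,π³,π⁴)`, `π⁴ = ∅`,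
`Σ_{□ ∈ ξ_fin} (1 − nlegs □)·(|ξ ∩ S₋(□)| + Σ_{□' ∈ ξ ∩ S₊(□)} nlegs □')`
plus `Σ_{(i,j), i ≠ j ∈ {1,2,3}} #(pairSet π i j)` is congruent to `NP₄(ξ)` mod 2. -/
theorem CKM_half_vs_canonical_half_sign
    (π : Fin 4 → Set (Fin 3 → ℕ)) (ξ : Set (Fin 4 → ℕ))
    (hξ : IsSolidPartitionWithLegs π ξ) (h4 : π 3 = ∅) :
    {p ∈ ξ | nlegs π p ≠ 1}.Finite ∧
    {p ∈ ξ | p 0 = p 1 ∧ p 1 = p 2 ∧ p 2 < p 3}.Finite ∧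
    (∀ p : Fin 4 → ℕ, (ξ ∩ Sminus p).Finite ∧ (ξ ∩ Splus p).Finite) ∧
    (∀ i ∈ ({0, 1, 2} : Finset (Fin 4)), ∀ j ∈ ({0, 1, 2} : Finset (Fin 4)), i ≠ j →
      (pairSet π i j).Finite) ∧
    Int.ModEq 2
      ((∑ᶠ p ∈ {p ∈ ξ | nlegs π p ≠ 1},
          (1 - (nlegs π p : ℤ)) *
            (((ξ ∩ Sminus p).ncard : ℤ) + ∑ᶠ x ∈ ξ ∩ Splus p, (nlegs π x : ℤ)))
        + ∑ i ∈ ({0, 1, 2} : Finset (Fin 4)),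
            ∑ j ∈ ({0, 1, 2} : Finset (Fin 4)).erase i, ((pairSet π i j).ncard : ℤ))
      (∑ᶠ p ∈ {p ∈ ξ | p 0 = p 1 ∧ p 1 = p 2 ∧ p 2 < p 3}, (1 - (nlegs π p : ℤ))) := by
  have hempty : ∀ i ∈ ({0, 1, 2} : Finset (Fin 4)), ∀ j ∈ ({0, 1, 2} : Finset (Fin 4)), i ≠ j →
      pairSet π i j = ∅ := fun i hi j hj =>
    pairSet_eq_empty π (by rintro rfl; simp at hi) (by rintro rfl; simp at hj)
  have hpairs : ∑ i ∈ ({0, 1, 2} : Finset (Fin 4)),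
      ∑ j ∈ ({0, 1, 2} : Finset (Fin 4)).erase i, ((pairSet π i j).ncard : ℤ) = 0 :=
    Finset.sum_eq_zero fun i hi => Finset.sum_eq_zero fun j hj => by
      simp [hempty i hi j (Finset.mem_of_mem_erase hj) (Finset.ne_of_mem_erase hj).symm]
  refine ⟨hξ.finite_nlegs_ne_one, hξ.finite_diagonal h4, fun p =>
    ⟨(Sminus_finite p).subset Set.inter_subset_right, hξ.finite_inter_Splus h4 p⟩,
    fun i hi j hj hij => by simp [hempty i hi j hj hij], ?_⟩
  rw [hpairs, add_zero]
  exact hξ.finsum_weight_modEq h4
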